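/- arXiv:2306.01968 — 2 statements merged into one kernel-verified Lean document; each statement's English description precedes it below -/
import Mathlib

section
/- Expected replenishment cycle length of the dynamic opaque selling policy (Theorem 6): Fix S ≥ 2, set T = N(S−1)+1 and c_d = 1/(10·binom(N,2)). Consider the balls-into-bins process for horizon T under the dynamic opaque policy: letting T⋆ be the first time t at which Gap(t) = max_i x_i(t) − t/N ≥ c_d·(T−t)·q/N, the policy sets ω(t) = 1 for all t > T⋆ and ω(t) = 0 for t ≤ T⋆, with flexed flex balls placed in the bin of their flex set with the smallest current load (ties broken in favor of the smallest index). Let R^d = min{t : max_i x_i(t) = S}. Then there exists a constant θ, depending only on N and q, such that N − 1 ≤ NS − E[R^d] ≤ θ for every S ≥ 2. -/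
/-!
The lower bound is `R ≤ T = N(S-1)+1`. For the upper bound, `E[T - R]` has to be bounded uniformly
in `S`, and `T - R = ∑_{t<T} 1{R ≤ t}`.

Let `y i = x i - t/N` be the load deviations, `V = √(1 + ∑ y i²)` (`devNorm`), `η = q/(18N)` and
`b = q/(4N)`. While flexing, the mean deviation of the bin receiving the next ball is at most
`-(q/(2N)) ∑ |y i|` (`drift_target`), because the lighter bin of a pair `{i, j}` has deviation
`(y i + y j - |y i - y j|)/2` and `∑ j |y i - y j| ≥ N |y i|`. Hence `V` has negative drift, and
`exp (η V)` contracts in mean by `exp (-η b)` whenever `V` is above a constant level (`exp_drift`).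

The potential equals `exp (η (V - b (T - t)))` after the trigger and the constant `exp (4η)` before
it. Before the trigger the gap is below `c_d (T-t) q / N`, which forces `V ≤ 1 + b (T - t)`, so the
potential cannot jump above `exp (4η)` at the trigger time (`potential_off`). After the trigger it is
a supermartingale up to errors that are geometric in the remaining time (`potential_on`). Its mean
is therefore bounded by a constant `potBound N q` (`expec_potential_le`).

Finally, `R ≤ t` forces `Gap(t) ≥ (T - t)/N`. This is incompatible with the trigger not having fired,
and it makes the potential at least `exp (η (T - t - 1)/(2N))` (`indicator_le_potential`), so
`P(R ≤ t)` is at most `potBound N q` times a geometric term in `T - 1 - t`, and the sum over `t` is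
bounded.
-/

attribute [local instance] Classical.propDecidable

/-- An arrival type: (is-flex-ball, preferred bin, flex set). -/
abbrev Arrival (N : ℕ) := Bool × Fin N × Finset (Fin N)

/-- Mass of a single arrival: `f ~ Bernoulli(q)`, `p` uniform on `Fin N`,
`F` uniform on the 2-element subsets of `Fin N`, mutually independent. -/
noncomputable def arrivalProb (N : ℕ) (q : ℝ) (a : Arrival N) : ℝ :=
  (if a.1 then q else 1 - q) * (1 / (N : ℝ)) *
    (if a.2.2.card = 2 then 1 / (N.choose 2 : ℝ) else 0)

/-- Mass of a sequence of `T` i.i.d. arrivals. -/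
noncomputable def seqMass (N T : ℕ) (q : ℝ) (xs : Fin T → Arrival N) : ℝ :=
  ∏ t, arrivalProb N q (xs t)

/-- Expectation of a real random variable on the canonical space of `T` arrivals. -/
noncomputable def expec (N T : ℕ) (q : ℝ) (X : (Fin T → Arrival N) → ℝ) : ℝ :=
  ∑ xs : Fin T → Arrival N, seqMass N T q xs * X xs

/-- Probability of an event on the canonical space of `T` arrivals. -/
noncomputable def prob (N T : ℕ) (q : ℝ) (A : (Fin T → Arrival N) → Prop) : ℝ :=
  ∑ xs : Fin T → Arrival N, if A xs then seqMass N T q xs else 0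

/-- The least-loaded bin in `F` (ties broken in favor of the smallest index). -/
noncomputable def argminBin {N : ℕ} [NeZero N] (x : Fin N → ℕ) (F : Finset (Fin N)) : Fin N :=
  if hF : (F.filter fun i => ∀ j ∈ F, x i ≤ x j).Nonempty
  then (F.filter fun i => ∀ j ∈ F, x i ≤ x j).min' hF
  else 0

/-- One step of the greedy (least-loaded) allocation: if the ball is a flex ball and
flexing is exerted, it goes to the least-loaded bin of its flex set (lexicographic
tie-breaking); otherwise it goes to its preferred bin. -/
noncomputable def greedyStep {N : ℕ} [NeZero N] (flex : Bool) (a : Arrival N)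
    (x : Fin N → ℕ) : Fin N → ℕ :=
  fun i => if i = (if a.1 && flex then argminBin x a.2.2 else a.2.1) then x i + 1 else x i

/-- Load process under a flexing rule `dec` (which may depend on the whole realization,
the time, and the current loads), with greedy placement of flexed flex balls. -/
noncomputable def greedyLoads {N T : ℕ} [NeZero N]
    (dec : (Fin T → Arrival N) → ℕ → (Fin N → ℕ) → Bool)
    (xs : Fin T → Arrival N) : ℕ → Fin N → ℕ
  | 0 => fun _ => 0
  | t + 1 =>
    if h : t < T then
      greedyStep (dec xs t (greedyLoads dec xs t)) (xs ⟨t, h⟩) (greedyLoads dec xs t)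
    else greedyLoads dec xs t

/-- The maximum load over all bins. -/
noncomputable def maxLoad {N : ℕ} (x : Fin N → ℕ) : ℕ := Finset.univ.sup x

/-- `Gap(t)` : maximum load minus the average load `t/N`. -/
noncomputable def gap {N : ℕ} (x : Fin N → ℕ) (t : ℕ) : ℝ :=
  (maxLoad x : ℝ) - (t : ℝ) / (N : ℝ)

/-- Number of flexed balls `M = ∑_t f_t ω(t)`. -/
noncomputable def numFlexed {N T : ℕ} [NeZero N]
    (dec : (Fin T → Arrival N) → ℕ → (Fin N → ℕ) → Bool) (xs : Fin T → Arrival N) : ℕ :=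
  ∑ t : Fin T, if (xs t).1 && dec xs (t : ℕ) (greedyLoads dec xs (t : ℕ)) then 1 else 0

/-- Flexing rule of a "static"-type policy: flex exactly from period
`T - c·√(T log T)` on (ball `t` corresponds to step index `t-1`). -/
noncomputable def lateDec (N T : ℕ) (c : ℝ) :
    (Fin T → Arrival N) → ℕ → (Fin N → ℕ) → Bool :=
  fun _ s _ =>
    if (T : ℝ) - c * Real.sqrt ((T : ℝ) * Real.log (T : ℝ)) ≤ ((s : ℝ) + 1) then true else false

/-- Flexing rule of the dynamic policy: flex at period `t = s+1` iff the current gap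
`Gap(t-1)` is at least `a_d (T - t) q / N` with `a_d = 1/(5 C(N,2))`. -/
noncomputable def dynDec (N T : ℕ) (q : ℝ) :
    (Fin T → Arrival N) → ℕ → (Fin N → ℕ) → Bool :=
  fun _ s x =>
    if (1 / (5 * (N.choose 2 : ℝ))) * ((T : ℝ) - ((s : ℝ) + 1)) * q / (N : ℝ) ≤ gap x s
    then true else false

/-- First time (within horizon `T`) at which the maximum load equals `S`. -/
noncomputable def hitTime {N : ℕ} (T S : ℕ) (x : ℕ → Fin N → ℕ) : ℕ :=
  if h : ((Finset.range (T + 1)).filter fun t => maxLoad (x t) = S).Nonempty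
  then ((Finset.range (T + 1)).filter fun t => maxLoad (x t) = S).min' h
  else T

/-- The dynamic opaque policy: the flag records whether the trigger condition
`Gap(t) ≥ c_d (T-t) q / N` (with `c_d = 1/(10 C(N,2))`) has held at some time `≤ t`;
from then on every flex ball is flexed (greedy placement). Returns (flag, loads). -/
noncomputable def dynOpaque (N T : ℕ) [NeZero N] (q : ℝ) (xs : Fin T → Arrival N) :
    ℕ → Bool × (Fin N → ℕ)
  | 0 =>
    (if (1 / (10 * (N.choose 2 : ℝ))) * (T : ℝ) * q / (N : ℝ) ≤ 0 then true else false,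
      fun _ => 0)
  | t + 1 =>
    let p := dynOpaque N T q xs t
    let x' := if h : t < T then greedyStep p.1 (xs ⟨t, h⟩) p.2 else p.2
    (p.1 ||
      (if (1 / (10 * (N.choose 2 : ℝ))) * ((T : ℝ) - ((t : ℝ) + 1)) * q / (N : ℝ) ≤
          gap x' (t + 1)
       then true else false),
     x')

/-- Number of flexed balls `D = ∑_{t=1}^{R} f_t ω(t)` during one replenishment cycle,
for a policy given by the flexing rule `dec`. -/
noncomputable def cycleFlexCount (N T : ℕ) [NeZero N]
    (dec : (Fin T → Arrival N) → ℕ → (Fin N → ℕ) → Bool) (S : ℕ)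
    (xs : Fin T → Arrival N) : ℕ :=
  ∑ t ∈ Finset.range (hitTime T S (greedyLoads dec xs)),
    if h : t < T then (if (xs ⟨t, h⟩).1 && dec xs t (greedyLoads dec xs t) then 1 else 0)
    else 0

/-- Number of flexed balls during one replenishment cycle of the dynamic opaque policy. -/
noncomputable def dynFlexCount (N T : ℕ) [NeZero N] (q : ℝ) (S : ℕ)
    (xs : Fin T → Arrival N) : ℕ :=
  ∑ t ∈ Finset.range (hitTime T S fun u => (dynOpaque N T q xs u).2),
    if h : t < T then (if (xs ⟨t, h⟩).1 && (dynOpaque N T q xs t).1 then 1 else 0) else 0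

/-- Expected replenishment cycle length `E[R^d]` of the dynamic opaque policy at
stock level `S` (horizon `T = N(S-1)+1`). -/
noncomputable def dynOpaqueER (N : ℕ) [NeZero N] (q : ℝ) (S : ℕ) : ℝ :=
  expec N (N * (S - 1) + 1) q fun xs =>
    (hitTime (N * (S - 1) + 1) S
      (fun t => (dynOpaque N (N * (S - 1) + 1) q xs t).2) : ℝ)

open Finset

/-! ### Drift of the receiving bin -/

/-- Every two-element subset is counted by exactly two ordered pairs of distinct elements. -/
theorem sum_offDiag_pair (N : ℕ) (h : Finset (Fin N) → ℝ) :
    ∑ p ∈ (univ : Finset (Fin N)).offDiag, h {p.1, p.2} =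
      2 * ∑ F : Finset (Fin N), if F.card = 2 then h F else 0 := by
  have hm : ∀ p ∈ (univ : Finset (Fin N)).offDiag,
      ({p.1, p.2} : Finset (Fin N)) ∈ (univ : Finset (Finset (Fin N))).filter (·.card = 2) := by
    intro p hp
    simp only [mem_offDiag] at hp
    simp [card_pair hp.2.2]
  rw [← sum_fiberwise_of_maps_to hm, ← sum_filter, mul_sum]
  refine sum_congr rfl fun F hF => ?_
  have hF2 : F.card = 2 := by simpa using hF
  have hfib : (univ : Finset (Fin N)).offDiag.filter (fun p => ({p.1, p.2} : Finset (Fin N)) = F)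
      = F.offDiag := by
    ext p
    simp only [mem_filter, mem_offDiag, mem_univ, true_and]
    constructor
    · rintro ⟨h1, rfl⟩
      simp [h1]
    · rintro ⟨h1, h2, h3⟩
      refine ⟨h3, eq_of_subset_of_card_le ?_ ?_⟩
      · intro z hz
        simp only [mem_insert, mem_singleton] at hz
        rcases hz with rfl | rfl <;> assumption
      · rw [card_pair h3, hF2]
  rw [sum_congr rfl (g := fun _ => h F)
    (fun p hp => by rw [(mem_filter.mp hp).2]), hfib, sum_const, offDiag_card, hF2]
  norm_num

theorem argminBin_spec {N : ℕ} [NeZero N] (x : Fin N → ℕ) (F : Finset (Fin N))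
    (hF : F.Nonempty) : argminBin x F ∈ F ∧ ∀ j ∈ F, x (argminBin x F) ≤ x j := by
  have hne : (F.filter fun i => ∀ j ∈ F, x i ≤ x j).Nonempty := by
    obtain ⟨i, hi, hmin⟩ := exists_min_image F x hF
    exact ⟨i, mem_filter.mpr ⟨hi, hmin⟩⟩
  have hmem := min'_mem _ hne
  unfold argminBin
  rw [dif_pos hne]
  exact mem_filter.mp hmem

/-- Total deviation of the lighter bin over all pairs. With `y i = x i - m`, the lighter bin of
`{i, j}` has deviation `(y i + y j - |y i - y j|) / 2`, and `∑ j, |y i - y j| ≥ N |y i|` because the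
`y j` sum to zero. -/
theorem sum_argmin_le {N : ℕ} [NeZero N] (x : Fin N → ℕ) (m : ℝ)
    (hsum : ∑ i, ((x i : ℝ) - m) = 0) :
    ∑ F : Finset (Fin N), (if F.card = 2 then ((x (argminBin x F) : ℝ) - m) else 0) ≤
      -((N : ℝ) / 4) * ∑ i, |(x i : ℝ) - m| := by
  set y : Fin N → ℝ := fun i => (x i : ℝ) - m with hy
  have h1 := sum_offDiag_pair N (fun F => y (argminBin x F))
  have hpair : ∀ p ∈ (univ : Finset (Fin N)).offDiag,
      y (argminBin x {p.1, p.2}) ≤ (y p.1 + y p.2 - |y p.1 - y p.2|) / 2 := by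
    intro p _
    have hs := (argminBin_spec x {p.1, p.2} (by simp)).2
    have e1 : (x (argminBin x {p.1, p.2}) : ℝ) ≤ x p.1 := by exact_mod_cast hs p.1 (by simp)
    have e2 : (x (argminBin x {p.1, p.2}) : ℝ) ≤ x p.2 := by exact_mod_cast hs p.2 (by simp)
    simp only [hy]
    rcases abs_cases ((x p.1 : ℝ) - m - (x p.2 - m)) with h | h <;> linarith
  have h2 := sum_le_sum hpair
  have h3 : ∑ p ∈ (univ : Finset (Fin N)).offDiag, (y p.1 + y p.2 - |y p.1 - y p.2|) / 2
      = ∑ i, ∑ j, (y i + y j - |y i - y j|) / 2 := by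
    have hd : ∑ p ∈ (univ : Finset (Fin N)).diag, (y p.1 + y p.2 - |y p.1 - y p.2|) / 2 = 0 := by
      rw [sum_diag]
      simpa using hsum
    have hu := sum_union (f := fun p : Fin N × Fin N => (y p.1 + y p.2 - |y p.1 - y p.2|) / 2)
      (disjoint_diag_offDiag (univ : Finset (Fin N)))
    rw [diag_union_offDiag, hd, zero_add] at hu
    rw [← hu, sum_product]
  have h4 : ∀ i, ∑ j, (y i + y j - |y i - y j|) / 2 ≤ ((N : ℝ) * y i - N * |y i|) / 2 := by
    intro i
    have hc : ∑ j, (y i - y j) = N * y i := by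
      rw [sum_sub_distrib, hsum]; simp
    have ha : (N : ℝ) * |y i| ≤ ∑ j, |y i - y j| := by
      have := abs_sum_le_sum_abs (fun j => y i - y j) univ
      rw [hc, abs_mul, Nat.abs_cast] at this
      exact this
    have he : ∑ j, (y i + y j - |y i - y j|) / 2
        = (N * y i + ∑ j, y j - ∑ j, |y i - y j|) / 2 := by
      rw [← sum_div, sum_sub_distrib, sum_add_distrib]; simp
    rw [he, hsum]; linarith
  have h5 := sum_le_sum fun i (_ : i ∈ (univ : Finset (Fin N))) => h4 i
  have h6 : ∑ i, ((N : ℝ) * y i - N * |y i|) / 2 = -((N : ℝ) / 2) * ∑ i, |y i| := by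
    rw [← sum_div, sum_sub_distrib, ← mul_sum, ← mul_sum, hsum]; ring
  have : ∑ F : Finset (Fin N), (if F.card = 2 then y (argminBin x F) else 0) ≤
      -((N : ℝ) / 4) * ∑ i, |y i| := by linarith
  exact this

/-- The bin receiving the ball of arrival `a` at loads `x`, flexing being exerted iff `flex`. -/
noncomputable def targetBin {N : ℕ} [NeZero N] (flex : Bool) (a : Arrival N)
    (x : Fin N → ℕ) : Fin N := if a.1 && flex then argminBin x a.2.2 else a.2.1

theorem card_two_sum (N : ℕ) :
    ∑ F : Finset (Fin N), (if F.card = 2 then (1 : ℝ) else 0) = N.choose 2 := by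
  rw [sum_boole, ← powerset_univ, ← powersetCard_eq_filter, card_powersetCard]; simp

theorem sum_arrival (N : ℕ) (q : ℝ) (g : Arrival N → ℝ) :
    ∑ a, arrivalProb N q a * g a =
      q / (N * N.choose 2) * ∑ p, ∑ F : Finset (Fin N), (if F.card = 2 then g (true, p, F) else 0)
      + (1 - q) / (N * N.choose 2) *
        ∑ p, ∑ F : Finset (Fin N), (if F.card = 2 then g (false, p, F) else 0) := by
  rw [Fintype.sum_prod_type, Fintype.sum_bool, Fintype.sum_prod_type, Fintype.sum_prod_type]
  simp only [mul_sum]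
  congr 1 <;>
  · refine sum_congr rfl fun p _ => sum_congr rfl fun F _ => ?_
    by_cases h : F.card = 2
    · simp only [arrivalProb, h, if_true, Bool.false_eq_true, if_false, div_eq_mul_inv, mul_inv]
      ring
    · simp [arrivalProb, h]

theorem arrivalProb_sum (N : ℕ) (hN : 2 ≤ N) (q : ℝ) : ∑ a, arrivalProb N q a = 1 := by
  have h := sum_arrival N q (fun _ => 1)
  simp only [mul_one, card_two_sum, sum_const, card_univ, Fintype.card_fin, nsmul_eq_mul] at h
  have h1 : (N : ℝ) ≠ 0 := by positivity
  have h2 : (N.choose 2 : ℝ) ≠ 0 := by exact_mod_cast (Nat.choose_pos hN).ne'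
  rw [h]; field_simp; ring

theorem arrivalProb_nonneg (N : ℕ) {q : ℝ} (hq0 : 0 < q) (hq1 : q ≤ 1) (a : Arrival N) :
    0 ≤ arrivalProb N q a := by
  unfold arrivalProb
  have : 0 ≤ 1 - q := by linarith
  positivity

/-- Negative drift of the deviation of the receiving bin while flexing. -/
theorem drift_target {N : ℕ} [NeZero N] (hN : 2 ≤ N) {q : ℝ} (hq0 : 0 < q)
    (x : Fin N → ℕ) (m : ℝ) (hsum : ∑ i, ((x i : ℝ) - m) = 0) :
    ∑ a, arrivalProb N q a * ((x (targetBin true a x) : ℝ) - m) ≤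
      -(q / (2 * N)) * ∑ i, |(x i : ℝ) - m| := by
  rw [sum_arrival]
  simp only [targetBin, Bool.and_self, if_true, Bool.false_and, Bool.false_eq_true, if_false]
  rw [sum_comm (f := fun (p : Fin N) (F : Finset (Fin N)) =>
    if F.card = 2 then ((x p : ℝ) - m) else 0)]
  have hz : ∑ F : Finset (Fin N), ∑ p : Fin N, (if F.card = 2 then ((x p : ℝ) - m) else 0) = 0 := by
    refine sum_eq_zero fun F _ => ?_
    split_ifs
    · exact hsum
    · simp
  rw [hz, mul_zero, add_zero, sum_const, card_univ, Fintype.card_fin, nsmul_eq_mul]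
  have h := sum_argmin_le x m hsum
  set A := ∑ i, |(x i : ℝ) - m|
  have hA : 0 ≤ A := sum_nonneg fun i _ => abs_nonneg _
  have hNr : (2 : ℝ) ≤ N := by exact_mod_cast hN
  have hC : (0 : ℝ) < N.choose 2 := by exact_mod_cast Nat.choose_pos hN
  have hC2 : (N.choose 2 : ℝ) ≤ N * N / 2 := by
    rw [Nat.cast_choose_two]; nlinarith
  calc q / (N * N.choose 2) * (N * _) ≤ q / (N * N.choose 2) * (N * (-((N : ℝ) / 4) * A)) := by
        gcongr
    _ = -(q * (N / 4 / N.choose 2) * A) := by field_simp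
    _ ≤ -(q * (1 / (2 * N)) * A) := by
        have : 1 / (2 * (N : ℝ)) ≤ N / 4 / N.choose 2 := by
          rw [div_div, div_le_div_iff₀ (by positivity) (by positivity)]; nlinarith
        exact neg_le_neg (by gcongr)
    _ = _ := by ring

/-! ### The smoothed norm of the deviations -/

/-- Smoothed Euclidean norm `√(1 + ∑ (x i - t/N)²)` of the load deviations at time `t`. -/
noncomputable def devNorm {N : ℕ} (x : Fin N → ℕ) (t : ℕ) : ℝ :=
  Real.sqrt (∑ i, ((x i : ℝ) - t / N) ^ 2 + 1)

theorem sum_dev {N : ℕ} [NeZero N] (x : Fin N → ℕ) (t : ℕ) (hx : ∑ i, x i = t) :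
    ∑ i, ((x i : ℝ) - t / N) = 0 := by
  have : (N : ℝ) ≠ 0 := by exact_mod_cast NeZero.ne N
  rw [sum_sub_distrib, ← Nat.cast_sum, hx]; simp; field_simp; simp

theorem devNorm_sq {N : ℕ} (x : Fin N → ℕ) (t : ℕ) :
    devNorm x t ^ 2 = ∑ i, ((x i : ℝ) - t / N) ^ 2 + 1 :=
  Real.sq_sqrt (by positivity)

theorem one_le_devNorm {N : ℕ} (x : Fin N → ℕ) (t : ℕ) : 1 ≤ devNorm x t := by
  apply Real.one_le_sqrt.mpr
  have : 0 ≤ ∑ i, ((x i : ℝ) - t / N) ^ 2 := by positivity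
  linarith

theorem abs_dev_le_devNorm {N : ℕ} (x : Fin N → ℕ) (t : ℕ) (i : Fin N) :
    |(x i : ℝ) - t / N| ≤ devNorm x t := by
  apply Real.abs_le_sqrt
  have := single_le_sum (f := fun i => ((x i : ℝ) - t / N) ^ 2)
    (fun i _ => sq_nonneg _) (mem_univ i)
  linarith

theorem devNorm_le_one_add_sum {N : ℕ} (x : Fin N → ℕ) (t : ℕ) :
    devNorm x t ≤ 1 + ∑ i, |(x i : ℝ) - t / N| := by
  have h0 : 0 ≤ ∑ i, |(x i : ℝ) - t / N| := sum_nonneg fun i _ => abs_nonneg _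
  apply Real.sqrt_le_iff.mpr ⟨by linarith, ?_⟩
  have h := sum_sq_le_sq_sum_of_nonneg (s := univ) (f := fun i => |(x i : ℝ) - t / N|)
    (fun i _ => abs_nonneg _)
  simp only [sq_abs] at h
  nlinarith

/-- The slacks `gap - (x i - t/N)` are nonnegative and sum to `N * gap`, so the sum of their squares is
at most `(N * gap)²`; this bounds the Euclidean norm of the deviations by `N * gap`. -/
theorem devNorm_le_gap {N : ℕ} [NeZero N] (x : Fin N → ℕ) (t : ℕ) (hx : ∑ i, x i = t) :
    0 ≤ gap x t ∧ devNorm x t ≤ 1 + N * gap x t := by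
  have hle : ∀ i, (x i : ℝ) - t / N ≤ gap x t := by
    intro i
    unfold gap maxLoad
    have : x i ≤ univ.sup x := le_sup (mem_univ i)
    have : (x i : ℝ) ≤ (univ.sup x : ℕ) := by exact_mod_cast this
    linarith
  have hs := sum_dev x t hx
  set g := gap x t
  have hN : (0 : ℝ) < N := by exact_mod_cast Nat.pos_of_ne_zero (NeZero.ne N)
  have hz : ∑ i, (g - ((x i : ℝ) - t / N)) = N * g := by
    rw [sum_sub_distrib, hs]; simp
  have hg : 0 ≤ g := by
    have : 0 ≤ ∑ i, (g - ((x i : ℝ) - t / N)) := sum_nonneg fun i _ => by linarith [hle i]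
    rw [hz] at this
    exact nonneg_of_mul_nonneg_right this hN
  refine ⟨hg, ?_⟩
  have h := sum_sq_le_sq_sum_of_nonneg (s := univ) (f := fun i => g - ((x i : ℝ) - t / N))
    (fun i _ => by linarith [hle i])
  rw [hz] at h
  have he : ∑ i, (g - ((x i : ℝ) - t / N)) ^ 2 = N * g ^ 2 + ∑ i, ((x i : ℝ) - t / N) ^ 2 := by
    have : ∀ i, (g - ((x i : ℝ) - t / N)) ^ 2
        = g ^ 2 - 2 * g * ((x i : ℝ) - t / N) + ((x i : ℝ) - t / N) ^ 2 := fun i => by ring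
    simp only [this]
    rw [sum_add_distrib, sum_sub_distrib, ← mul_sum, hs]; simp
  rw [he] at h
  apply Real.sqrt_le_iff.mpr ⟨by positivity, ?_⟩
  have : 0 ≤ N * g := by positivity
  nlinarith [sq_nonneg g]

theorem greedyStep_apply {N : ℕ} [NeZero N] (flex : Bool) (a : Arrival N) (x : Fin N → ℕ)
    (i : Fin N) :
    greedyStep flex a x i = x i + if i = targetBin flex a x then 1 else 0 := by
  unfold greedyStep targetBin
  split_ifs <;> simp_all

theorem sum_greedyStep {N : ℕ} [NeZero N] (flex : Bool) (a : Arrival N) (x : Fin N → ℕ) :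
    ∑ i, greedyStep flex a x i = ∑ i, x i + 1 := by
  simp only [greedyStep_apply, sum_add_distrib]; simp

/-- First-order bound on the increment of the smoothed norm, from
`W * V ≤ (W² + V²) / 2` for the new norm `W` and the old norm `V`. -/
theorem devNorm_step {N : ℕ} [NeZero N] (flex : Bool) (a : Arrival N) (x : Fin N → ℕ) (t : ℕ)
    (hx : ∑ i, x i = t) :
    devNorm (greedyStep flex a x) (t + 1) ≤ devNorm x t +
      (2 * ((x (targetBin flex a x) : ℝ) - t / N) + 1) / (2 * devNorm x t) := by
  have hs := sum_dev x t hx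
  have hN : (0 : ℝ) < N := by exact_mod_cast Nat.pos_of_ne_zero (NeZero.ne N)
  set j := targetBin flex a x with hj
  have hq' : devNorm (greedyStep flex a x) (t + 1) ^ 2
      ≤ devNorm x t ^ 2 + 2 * ((x j : ℝ) - t / N) + 1 := by
    rw [devNorm_sq, devNorm_sq]
    have : ∀ i, ((greedyStep flex a x i : ℝ) - (t + 1 : ℕ) / N) ^ 2
        = ((x i : ℝ) - t / N) ^ 2 - (2 / N) * ((x i : ℝ) - t / N) + 1 / N ^ 2
          + if i = j then (2 * ((x i : ℝ) - t / N) + 1 - 2 / N) else 0 := by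
      intro i
      rw [greedyStep_apply, ← hj]
      split_ifs <;> push_cast <;> field_simp <;> ring
    simp only [this]
    rw [sum_add_distrib, sum_add_distrib, sum_sub_distrib, ← mul_sum, hs, sum_ite_eq']
    simp only [mem_univ, if_true, sum_const, card_univ, Fintype.card_fin, nsmul_eq_mul]
    have e : (N : ℝ) * (1 / N ^ 2) = 1 / N := by field_simp
    have e2 : (2 : ℝ) / N = 2 * (1 / N) := by ring
    have e3 : (0 : ℝ) < 1 / N := by positivity
    rw [e, e2]; linarith
  have h1 := one_le_devNorm x t
  set V := devNorm x t
  set V' := devNorm (greedyStep flex a x) (t + 1)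
  rw [← sub_le_iff_le_add', le_div_iff₀ (by linarith)]
  nlinarith [sq_nonneg (V' - V)]

theorem incr_bound {N : ℕ} (x : Fin N → ℕ) (t : ℕ) (j : Fin N) :
    |(2 * ((x j : ℝ) - t / N) + 1) / (2 * devNorm x t)| ≤ 3 / 2 := by
  have h1 := one_le_devNorm x t
  have h2 := abs_le.mp (abs_dev_le_devNorm x t j)
  rw [abs_div, abs_of_pos (by linarith : 0 < 2 * devNorm x t), div_le_iff₀ (by linarith), abs_le]
  constructor <;> linarith

/-- Exponential drift while flexing: with `η = q/(18N)` and `b = q/(4N)`, above the level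
`8N/q` the exponential of the smoothed norm contracts in mean by `exp (-η b)`. -/
theorem exp_drift {N : ℕ} [NeZero N] (hN : 2 ≤ N) {q : ℝ} (hq0 : 0 < q) (hq1 : q ≤ 1)
    (x : Fin N → ℕ) (t : ℕ) (hx : ∑ i, x i = t) (hL : 8 * N / q ≤ devNorm x t) :
    ∑ a, arrivalProb N q a * Real.exp (q / (18 * N) * devNorm (greedyStep true a x) (t + 1)) ≤
      Real.exp (q / (18 * N) * (devNorm x t - q / (4 * N))) := by
  have hNr : (2 : ℝ) ≤ N := by exact_mod_cast hN
  have h1 := one_le_devNorm x t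
  have hs := sum_dev x t hx
  have hdr := drift_target hN hq0 x (t / N) hs
  have hVA := devNorm_le_one_add_sum x t
  have hmass := arrivalProb_sum N hN q
  set V := devNorm x t with hV
  set η := q / (18 * (N : ℝ)) with hη
  have hη0 : 0 < η := by positivity
  have hη1 : η ≤ 1 / 36 := by
    rw [hη, div_le_div_iff₀ (by positivity) (by norm_num)]; nlinarith
  let u : Arrival N → ℝ := fun a =>
    (2 * ((x (targetBin true a x) : ℝ) - t / N) + 1) / (2 * V)
  have hterm : ∀ a, Real.exp (η * devNorm (greedyStep true a x) (t + 1)) ≤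
      Real.exp (η * V) * (1 + η * u a + η ^ 2 * (9 / 4)) := by
    intro a
    have hu : |u a| ≤ 3 / 2 := incr_bound x t _
    have hst : devNorm (greedyStep true a x) (t + 1) ≤ V + u a := devNorm_step true a x t hx
    have hηu : |η * u a| ≤ 1 := by
      rw [abs_mul, abs_of_pos hη0]; nlinarith [abs_nonneg (u a)]
    have he := (abs_le.mp (Real.abs_exp_sub_one_sub_id_le hηu)).2
    have hsq : (η * u a) ^ 2 ≤ η ^ 2 * (9 / 4) := by
      rw [mul_pow]
      have : u a ^ 2 ≤ 9 / 4 := by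
        rw [← sq_abs]; nlinarith [abs_nonneg (u a)]
      gcongr
    calc Real.exp (η * devNorm (greedyStep true a x) (t + 1))
        ≤ Real.exp (η * V + η * u a) := by
          apply Real.exp_le_exp.mpr; nlinarith
      _ = Real.exp (η * V) * Real.exp (η * u a) := Real.exp_add _ _
      _ ≤ _ := by gcongr; linarith
  have hmean : ∑ a, arrivalProb N q a * u a ≤ -(3 * q / (8 * N)) := by
    have e : ∑ a, arrivalProb N q a * u a =
        (2 * ∑ a, arrivalProb N q a * ((x (targetBin true a x) : ℝ) - t / N) + 1) / (2 * V) := by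
      rw [← hmass, mul_sum, ← sum_add_distrib, sum_div]
      refine sum_congr rfl fun a _ => ?_
      simp only [u]; ring
    have hL' : 8 * N ≤ V * q := by rwa [div_le_iff₀ hq0] at hL
    rw [e, div_le_iff₀ (by linarith)]
    have hk : q / (2 * (N : ℝ)) * (V - 1) ≤ q / (2 * N) * ∑ i, |(x i : ℝ) - t / N| := by
      gcongr; linarith
    have hk2 : q / (2 * (N : ℝ)) ≤ 1 / 4 := by
      rw [div_le_div_iff₀ (by positivity) (by norm_num)]; nlinarith
    have hk3 : (4 : ℝ) ≤ q / (2 * N) * V := by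
      rw [div_mul_eq_mul_div, le_div_iff₀ (by positivity)]; linarith
    have hk4 : 3 * q / (8 * (N : ℝ)) = 3 / 4 * (q / (2 * N)) := by field_simp; norm_num
    rw [hk4]
    nlinarith
  -- The value of `η` makes the second-order term a third of the drift.
  have hη18 : η ^ 2 * (9 / 4) = η * (q / (8 * N)) := by rw [hη]; field_simp; norm_num
  calc ∑ a, arrivalProb N q a * Real.exp (η * devNorm (greedyStep true a x) (t + 1))
      ≤ ∑ a, arrivalProb N q a * (Real.exp (η * V) * (1 + η * u a + η ^ 2 * (9 / 4))) := by
        refine sum_le_sum fun a _ => ?_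
        exact mul_le_mul_of_nonneg_left (hterm a) (arrivalProb_nonneg N hq0 hq1 a)
    _ = Real.exp (η * V) * ((1 + η ^ 2 * (9 / 4)) * ∑ a, arrivalProb N q a
          + η * ∑ a, arrivalProb N q a * u a) := by
        simp only [mul_sum, ← sum_add_distrib]
        refine sum_congr rfl fun a _ => by ring
    _ ≤ Real.exp (η * V) * (1 - η * (q / (4 * N))) := by
        rw [hmass]
        gcongr
        have := mul_le_mul_of_nonneg_left hmean hη0.le
        rw [hη18]
        have e : η * (q / (8 * N)) + η * -(3 * q / (8 * N)) = - (η * (q / (4 * N))) := by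
          field_simp; ring
        linarith
    _ ≤ Real.exp (η * V) * Real.exp (-(η * (q / (4 * N)))) := by
        gcongr
        have := Real.add_one_le_exp (-(η * (q / (4 * (N : ℝ)))))
        linarith
    _ = _ := by rw [← Real.exp_add]; ring_nf

/-! ### Expectation over i.i.d. arrivals -/

theorem seqMass_nonneg (N T : ℕ) {q : ℝ} (hq0 : 0 < q) (hq1 : q ≤ 1) (xs : Fin T → Arrival N) :
    0 ≤ seqMass N T q xs :=
  prod_nonneg fun _ _ => arrivalProb_nonneg N hq0 hq1 _

theorem seqMass_sum (N T : ℕ) (hN : 2 ≤ N) (q : ℝ) : ∑ xs, seqMass N T q xs = 1 := by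
  have h := Finset.prod_univ_sum (fun _ : Fin T => (univ : Finset (Arrival N)))
    (fun _ a => arrivalProb N q a)
  rw [Fintype.piFinset_univ] at h
  simp only [arrivalProb_sum N hN q, prod_const_one] at h
  exact h.symm

theorem expec_mono (N T : ℕ) {q : ℝ} (hq0 : 0 < q) (hq1 : q ≤ 1)
    {X Y : (Fin T → Arrival N) → ℝ} (h : ∀ xs, X xs ≤ Y xs) :
    expec N T q X ≤ expec N T q Y :=
  sum_le_sum fun xs _ => mul_le_mul_of_nonneg_left (h xs) (seqMass_nonneg N T hq0 hq1 xs)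

theorem expec_const (N T : ℕ) (hN : 2 ≤ N) (q c : ℝ) : expec N T q (fun _ => c) = c := by
  unfold expec; rw [← sum_mul, seqMass_sum N T hN, one_mul]

theorem expec_add (N T : ℕ) (q : ℝ) (X Y : (Fin T → Arrival N) → ℝ) :
    expec N T q (fun xs => X xs + Y xs) = expec N T q X + expec N T q Y := by
  unfold expec; rw [← sum_add_distrib]; exact sum_congr rfl fun _ _ => by ring

theorem expec_mul_const (N T : ℕ) (q c : ℝ) (X : (Fin T → Arrival N) → ℝ) :
    expec N T q (fun xs => X xs * c) = expec N T q X * c := by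
  unfold expec; rw [sum_mul]; exact sum_congr rfl fun _ _ => by ring

theorem expec_sum (N T : ℕ) (q : ℝ) (n : ℕ) (X : ℕ → (Fin T → Arrival N) → ℝ) :
    expec N T q (fun xs => ∑ t ∈ range n, X t xs) = ∑ t ∈ range n, expec N T q (X t) := by
  unfold expec; rw [sum_comm]; exact sum_congr rfl fun _ _ => by rw [mul_sum]

/-- Resampling the arrival at time `t` does not change the expectation. This replaces
conditioning on the first `t` arrivals. -/
theorem expec_resample (N T : ℕ) (hN : 2 ≤ N) (q : ℝ) (t : Fin T)
    (X : (Fin T → Arrival N) → ℝ) :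
    expec N T q X =
      expec N T q (fun xs => ∑ a, arrivalProb N q a * X (Function.update xs t a)) := by
  let e : ((Fin T → Arrival N) × Arrival N) → ((Fin T → Arrival N) × Arrival N) :=
    fun p => (Function.update p.1 t p.2, p.1 t)
  have he : Function.Involutive e := by
    intro p; simp [e]
  have hmass : ∀ (xs : Fin T → Arrival N) (a : Arrival N),
      seqMass N T q (Function.update xs t a) * arrivalProb N q (xs t)
        = seqMass N T q xs * arrivalProb N q a := by
    intro xs a
    unfold seqMass
    rw [← mul_prod_erase univ _ (mem_univ t), ← mul_prod_erase univ (fun s => arrivalProb N q (xs s))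
      (mem_univ t)]
    rw [prod_congr rfl (g := fun s => arrivalProb N q (xs s))
      (fun s hs => by rw [Function.update_of_ne (ne_of_mem_erase hs)])]
    rw [Function.update_self]; ring
  have h1 : expec N T q X = ∑ p : (Fin T → Arrival N) × Arrival N,
      seqMass N T q p.1 * arrivalProb N q p.2 * X p.1 := by
    rw [Fintype.sum_prod_type]
    unfold expec
    refine sum_congr rfl fun xs _ => ?_
    simp only
    rw [← sum_mul, ← mul_sum, arrivalProb_sum N hN, mul_one]
  rw [h1, ← Equiv.sum_comp he.toPerm, Fintype.sum_prod_type]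
  unfold expec
  refine sum_congr rfl fun xs _ => ?_
  rw [mul_sum]
  refine sum_congr rfl fun a _ => ?_
  simp only [Function.Involutive.coe_toPerm, e]
  rw [hmass]; ring

/-! ### The load process of the dynamic opaque policy -/

theorem dynOpaque_succ_loads {N T : ℕ} [NeZero N] (q : ℝ) (xs : Fin T → Arrival N) (t : ℕ)
    (h : t < T) : (dynOpaque N T q xs (t + 1)).2 =
      greedyStep (dynOpaque N T q xs t).1 (xs ⟨t, h⟩) (dynOpaque N T q xs t).2 := by
  simp [dynOpaque, h]

theorem dynOpaque_flag_mono {N T : ℕ} [NeZero N] (q : ℝ) (xs : Fin T → Arrival N) (t : ℕ)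
    (h : (dynOpaque N T q xs t).1 = true) : (dynOpaque N T q xs (t + 1)).1 = true := by
  simp [dynOpaque, h]

/-- The state at time `s` does not depend on the arrivals from `s` on. -/
theorem dynOpaque_update {N T : ℕ} [NeZero N] (q : ℝ) (xs : Fin T → Arrival N) (t : Fin T)
    (a : Arrival N) (s : ℕ) (hs : s ≤ t) :
    dynOpaque N T q (Function.update xs t a) s = dynOpaque N T q xs s := by
  induction s with
  | zero => rfl
  | succ s ih =>
    have hsT : s < T := by have := t.2; omega
    have hne : (⟨s, hsT⟩ : Fin T) ≠ t := by
      intro h; rw [← h] at hs; simp at hs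
    simp only [dynOpaque, ih (by omega), Function.update_of_ne hne]

theorem sum_dynOpaque {N T : ℕ} [NeZero N] (q : ℝ) (xs : Fin T → Arrival N) (t : ℕ)
    (ht : t ≤ T) : ∑ i, (dynOpaque N T q xs t).2 i = t := by
  induction t with
  | zero => simp [dynOpaque]
  | succ t ih =>
    rw [dynOpaque_succ_loads q xs t (by omega), sum_greedyStep, ih (by omega)]

theorem gap_lt_of_flag_false {N T : ℕ} [NeZero N] (q : ℝ) (xs : Fin T → Arrival N) (t : ℕ)
    (h : (dynOpaque N T q xs t).1 = false) :
    gap (dynOpaque N T q xs t).2 t <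
      (1 / (10 * (N.choose 2 : ℝ))) * ((T : ℝ) - t) * q / (N : ℝ) := by
  cases t with
  | zero =>
    have hg : gap (dynOpaque N T q xs 0).2 0 = 0 := by
      simp [gap, maxLoad, dynOpaque, Finset.sup_eq_zero]
    rw [hg]
    by_contra hc
    rw [not_lt] at hc
    have : (1 / (10 * (N.choose 2 : ℝ))) * (T : ℝ) * q / (N : ℝ) ≤ 0 := by
      simpa using hc
    rw [dynOpaque, if_pos this] at h
    simp at h
  | succ t =>
    by_contra hc
    rw [not_lt] at hc
    have hfl : (dynOpaque N T q xs (t + 1)).1 = ((dynOpaque N T q xs t).1 ||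
      (if (1 / (10 * (N.choose 2 : ℝ))) * ((T : ℝ) - ((t : ℝ) + 1)) * q / (N : ℝ) ≤
          gap (dynOpaque N T q xs (t + 1)).2 (t + 1) then true else false)) := rfl
    push_cast at hc
    rw [hfl, if_pos hc] at h
    simp at h

/-- The trigger threshold, scaled by `N`, is below the slope `q/(4N)` used in the potential. -/
theorem threshold_le {N : ℕ} (hN : 2 ≤ N) {q r : ℝ} (hq0 : 0 < q) (hr : 0 ≤ r) :
    N * ((1 / (10 * (N.choose 2 : ℝ))) * r * q / (N : ℝ)) ≤ q / (4 * N) * r := by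
  have hNr : (2 : ℝ) ≤ N := by exact_mod_cast hN
  have hC : (0 : ℝ) < N.choose 2 := by exact_mod_cast Nat.choose_pos hN
  have hC2 : (N : ℝ) / 2 ≤ N.choose 2 := by rw [Nat.cast_choose_two]; nlinarith
  have h : 1 / (10 * (N.choose 2 : ℝ)) ≤ 1 / (4 * N) := by
    apply one_div_le_one_div_of_le (by positivity); linarith
  calc N * ((1 / (10 * (N.choose 2 : ℝ))) * r * q / (N : ℝ))
      = 1 / (10 * (N.choose 2 : ℝ)) * (r * q) := by field_simp
    _ ≤ 1 / (4 * N) * (r * q) := by gcongr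
    _ = _ := by ring

/-! ### The potential -/

/-- The potential: once the trigger has fired, the exponential of the smoothed norm minus a
linear function of the remaining time; before that, a constant dominating every value the
exponential can take at the trigger time. -/
noncomputable def potential (N T : ℕ) [NeZero N] (q : ℝ) (t : ℕ) (xs : Fin T → Arrival N) : ℝ :=
  if (dynOpaque N T q xs t).1 = true then
    Real.exp (q / (18 * N) * (devNorm (dynOpaque N T q xs t).2 t - q / (4 * N) * ((T : ℝ) - t)))
  else Real.exp (q / (18 * N) * 4)

theorem potential_zero {N T : ℕ} [NeZero N] {q : ℝ} (hq0 : 0 < q) (xs : Fin T → Arrival N) :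
    potential N T q 0 xs ≤ Real.exp (q / (18 * N) * 4) := by
  unfold potential
  split_ifs
  · have : devNorm (dynOpaque N T q xs 0).2 0 = 1 := by simp [devNorm, dynOpaque]
    rw [this]
    have h : 0 ≤ q / (4 * (N : ℝ)) * ((T : ℝ) - (0 : ℕ)) := by simp; positivity
    gcongr
    linarith
  · exact le_rfl

/-- While the trigger has not fired, the gap is below the threshold, so the smoothed norm is at most
`1 + (q/(4N)) (T - t)`; a single step then cannot push the potential above its initial constant. -/
theorem potential_off {N T : ℕ} [NeZero N] (hN : 2 ≤ N) {q : ℝ} (hq0 : 0 < q) (hq1 : q ≤ 1)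
    (xs : Fin T → Arrival N) (t : ℕ) (ht : t < T) (hf : (dynOpaque N T q xs t).1 = false) :
    potential N T q (t + 1) xs ≤ Real.exp (q / (18 * N) * 4) := by
  unfold potential
  split_ifs
  · have hNr : (2 : ℝ) ≤ N := by exact_mod_cast hN
    have hx := sum_dynOpaque q xs t ht.le
    have hg := gap_lt_of_flag_false q xs t hf
    have hV := (devNorm_le_gap _ t hx).2
    have hr : (0 : ℝ) ≤ (T : ℝ) - t := by
      have : (t : ℝ) < T := by exact_mod_cast ht
      linarith
    have hth := threshold_le hN hq0 hr
    have hst := devNorm_step (dynOpaque N T q xs t).1 (xs ⟨t, ht⟩) _ t hx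
    rw [← dynOpaque_succ_loads] at hst
    have hin := (abs_le.mp (incr_bound (dynOpaque N T q xs t).2 t
      (targetBin (dynOpaque N T q xs t).1 (xs ⟨t, ht⟩) (dynOpaque N T q xs t).2))).2
    have hNg := mul_le_mul_of_nonneg_left hg.le (by positivity : (0 : ℝ) ≤ N)
    have hb : q / (4 * (N : ℝ)) ≤ 1 := by
      rw [div_le_one (by positivity)]; linarith
    gcongr
    push_cast
    linarith
  · exact le_rfl

/-- Once the trigger has fired, the potential is a supermartingale up to an error that decays
geometrically in the remaining time; the error comes from states with small smoothed norm. -/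
theorem potential_on {N T : ℕ} [NeZero N] (hN : 2 ≤ N) {q : ℝ} (hq0 : 0 < q) (hq1 : q ≤ 1)
    (xs : Fin T → Arrival N) (t : ℕ) (ht : t < T) (hf : (dynOpaque N T q xs t).1 = true) :
    ∑ a, arrivalProb N q a * potential N T q (t + 1) (Function.update xs ⟨t, ht⟩ a) ≤
      potential N T q t xs + Real.exp (q / (18 * N) * (8 * N / q + 2)) *
        Real.exp (-(q / (18 * N) * (q / (4 * N)))) ^ (T - 1 - t) := by
  have hNr : (2 : ℝ) ≤ N := by exact_mod_cast hN
  have hx := sum_dynOpaque q xs t ht.le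
  have hcast : ((T - 1 - t : ℕ) : ℝ) = (T : ℝ) - (t + 1) := by
    rw [Nat.sub_sub, Nat.cast_sub (by omega)]; push_cast; ring
  rw [← Real.exp_nat_mul, hcast]
  set η := q / (18 * (N : ℝ)) with hη
  set b := q / (4 * (N : ℝ)) with hb
  have hη0 : 0 < η := by positivity
  set x := (dynOpaque N T q xs t).2 with hxdef
  have hpot : ∀ a, potential N T q (t + 1) (Function.update xs ⟨t, ht⟩ a) =
      Real.exp (η * devNorm (greedyStep true a x) (t + 1)) *
        Real.exp (-(η * b * ((T : ℝ) - (t + 1)))) := by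
    intro a
    have hup := dynOpaque_update q xs ⟨t, ht⟩ a t le_rfl
    have hl := dynOpaque_succ_loads q (Function.update xs ⟨t, ht⟩ a) t ht
    rw [Function.update_self, hup, hf, ← hxdef] at hl
    have hfl := dynOpaque_flag_mono q (Function.update xs ⟨t, ht⟩ a) t (by rw [hup, hf])
    unfold potential
    rw [if_pos hfl, hl, ← Real.exp_add, ← hη, ← hb]
    congr 1
    push_cast
    ring
  simp only [hpot, ← mul_assoc]
  rw [← sum_mul]
  have hcur : potential N T q t xs = Real.exp (η * (devNorm x t - b * ((T : ℝ) - t))) := by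
    unfold potential; rw [if_pos hf]
  rw [hcur]
  by_cases hL : 8 * N / q ≤ devNorm x t
  · have h := exp_drift hN hq0 hq1 x t hx hL
    have : (∑ a, arrivalProb N q a * Real.exp (η * devNorm (greedyStep true a x) (t + 1))) *
        Real.exp (-(η * b * ((T : ℝ) - (t + 1)))) ≤
        Real.exp (η * (devNorm x t - b * ((T : ℝ) - t))) := by
      calc _ ≤ Real.exp (η * (devNorm x t - b)) * Real.exp (-(η * b * ((T : ℝ) - (t + 1)))) := by
            gcongr
        _ = _ := by rw [← Real.exp_add]; ring_nf
    have hpos := mul_pos (Real.exp_pos (η * (8 * N / q + 2)))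
      (Real.exp_pos (((T : ℝ) - (t + 1)) * -(η * b)))
    linarith
  · have : ∑ a, arrivalProb N q a * Real.exp (η * devNorm (greedyStep true a x) (t + 1)) ≤
        Real.exp (η * (8 * N / q + 2)) := by
      calc _ ≤ ∑ a, arrivalProb N q a * Real.exp (η * (8 * N / q + 2)) := by
            refine sum_le_sum fun a _ => mul_le_mul_of_nonneg_left ?_
              (arrivalProb_nonneg N hq0 hq1 a)
            have hst := devNorm_step true a x t hx
            have hin := (abs_le.mp (incr_bound x t (targetBin true a x))).2
            have : devNorm (greedyStep true a x) (t + 1) ≤ 8 * N / q + 2 := by linarith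
            gcongr
        _ = _ := by rw [← sum_mul, arrivalProb_sum N hN, one_mul]
    have h2 : (∑ a, arrivalProb N q a * Real.exp (η * devNorm (greedyStep true a x) (t + 1))) *
        Real.exp (-(η * b * ((T : ℝ) - (t + 1)))) ≤ Real.exp (η * (8 * N / q + 2)) *
        Real.exp (((T : ℝ) - (t + 1)) * -(η * b)) := by
      rw [show ((T : ℝ) - (t + 1)) * -(η * b) = -(η * b * ((T : ℝ) - (t + 1))) by ring]
      gcongr
    have hpos := Real.exp_pos (η * (devNorm x t - b * ((T : ℝ) - t)))
    linarith

theorem expec_potential_succ {N T : ℕ} [NeZero N] (hN : 2 ≤ N) {q : ℝ} (hq0 : 0 < q)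
    (hq1 : q ≤ 1) (t : ℕ) (ht : t < T) :
    expec N T q (potential N T q (t + 1)) ≤ expec N T q (potential N T q t) +
      Real.exp (q / (18 * N) * (8 * N / q + 2)) *
        Real.exp (-(q / (18 * N) * (q / (4 * N)))) ^ (T - 1 - t) := by
  rw [expec_resample N T hN q ⟨t, ht⟩]
  set ε := Real.exp (q / (18 * N) * (8 * N / q + 2)) *
        Real.exp (-(q / (18 * N) * (q / (4 * N)))) ^ (T - 1 - t)
  have hε : 0 ≤ ε := by positivity
  rw [← expec_const N T hN q ε, ← expec_add]
  refine expec_mono N T hq0 hq1 fun xs => ?_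
  cases hf : (dynOpaque N T q xs t).1 with
  | true => exact potential_on hN hq0 hq1 xs t ht hf
  | false =>
    have hcur : potential N T q t xs = Real.exp (q / (18 * N) * 4) := by
      unfold potential; simp [hf]
    calc _ ≤ ∑ a, arrivalProb N q a * Real.exp (q / (18 * N) * 4) := by
          refine sum_le_sum fun a _ => mul_le_mul_of_nonneg_left ?_
            (arrivalProb_nonneg N hq0 hq1 a)
          apply potential_off hN hq0 hq1 _ t ht
          rw [dynOpaque_update q xs ⟨t, ht⟩ a t le_rfl, hf]
      _ = Real.exp (q / (18 * N) * 4) := by rw [← sum_mul, arrivalProb_sum N hN, one_mul]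
      _ ≤ _ := by rw [hcur]; linarith

theorem geom_reflect_le {r : ℝ} (hr0 : 0 ≤ r) (hr1 : r < 1) (T n : ℕ) (hn : n ≤ T) :
    ∑ s ∈ range n, r ^ (T - 1 - s) ≤ (1 - r)⁻¹ := by
  calc ∑ s ∈ range n, r ^ (T - 1 - s) ≤ ∑ s ∈ range T, r ^ (T - 1 - s) :=
        sum_le_sum_of_subset_of_nonneg (range_mono hn) fun _ _ _ => by positivity
    _ = ∑ s ∈ range T, r ^ s := sum_range_reflect (fun s => r ^ s) T
    _ ≤ ∑' s, r ^ s := (summable_geometric_of_lt_one hr0 hr1).sum_le_tsum _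
        fun _ _ => by positivity
    _ = _ := tsum_geometric_of_lt_one hr0 hr1

/-- Uniform bound on the mean potential, depending only on `N` and `q`. -/
noncomputable def potBound (N : ℕ) (q : ℝ) : ℝ :=
  Real.exp (q / (18 * N) * 4) + Real.exp (q / (18 * N) * (8 * N / q + 2)) *
    (1 - Real.exp (-(q / (18 * N) * (q / (4 * N)))))⁻¹

theorem expec_potential_le {N T : ℕ} [NeZero N] (hN : 2 ≤ N) {q : ℝ} (hq0 : 0 < q)
    (hq1 : q ≤ 1) (t : ℕ) (ht : t ≤ T) :
    expec N T q (potential N T q t) ≤ potBound N q := by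
  have h : ∀ t ≤ T, expec N T q (potential N T q t) ≤ Real.exp (q / (18 * N) * 4) +
      Real.exp (q / (18 * N) * (8 * N / q + 2)) *
        ∑ s ∈ range t, Real.exp (-(q / (18 * N) * (q / (4 * N)))) ^ (T - 1 - s) := by
    intro t ht
    induction t with
    | zero =>
      have := expec_mono N T hq0 hq1 (fun xs => potential_zero (N := N) hq0 xs)
      rw [expec_const N T hN] at this
      simpa using this
    | succ t ih =>
      have h1 := expec_potential_succ hN hq0 hq1 t ht
      have h2 := ih (by omega)
      rw [sum_range_succ, mul_add]
      linarith
  have hNr : (2 : ℝ) ≤ N := by exact_mod_cast hN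
  refine (h t ht).trans ?_
  unfold potBound
  gcongr
  exact geom_reflect_le (Real.exp_pos _).le
    (by rw [Real.exp_lt_one_iff]; have : 0 < q / (18 * (N : ℝ)) * (q / (4 * N)) := by positivity
        linarith) T t ht

/-! ### From the potential to the hitting time -/

theorem maxLoad_mono {N T : ℕ} [NeZero N] (q : ℝ) (xs : Fin T → Arrival N) :
    Monotone fun t => maxLoad (dynOpaque N T q xs t).2 := by
  refine monotone_nat_of_le_succ fun t => ?_
  refine Finset.sup_mono_fun fun i _ => ?_
  by_cases h : t < T
  · rw [dynOpaque_succ_loads q xs t h, greedyStep_apply]; omega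
  · simp [dynOpaque, h]

theorem hitTime_le {N : ℕ} (T S : ℕ) (x : ℕ → Fin N → ℕ) : hitTime T S x ≤ T := by
  unfold hitTime
  split_ifs with h
  · have := min'_mem _ h
    simp only [mem_filter, mem_range] at this
    omega
  · exact le_rfl

theorem maxLoad_hitTime {N : ℕ} (T S : ℕ) (x : ℕ → Fin N → ℕ) (hlt : hitTime T S x < T) :
    maxLoad (x (hitTime T S x)) = S := by
  unfold hitTime at hlt ⊢
  split_ifs at hlt ⊢ with h
  · exact (mem_filter.mp (min'_mem _ h)).2
  · exact absurd hlt (lt_irrefl _)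

/-- If the level `S` has been reached by time `t < T`, the trigger has fired and the potential
is exponentially large in the remaining time. -/
theorem indicator_le_potential {N S : ℕ} [NeZero N] (hN : 2 ≤ N) {q : ℝ} (hq0 : 0 < q)
    (hq1 : q ≤ 1) (hS : 2 ≤ S) (xs : Fin (N * (S - 1) + 1) → Arrival N) (t : ℕ)
    (ht : t < N * (S - 1) + 1) :
    (if hitTime (N * (S - 1) + 1) S (fun t => (dynOpaque N (N * (S - 1) + 1) q xs t).2) ≤ t
      then (1 : ℝ) else 0) ≤
    potential N (N * (S - 1) + 1) q t xs *
      Real.exp (-(q / (18 * N) * (1 / (2 * N)))) ^ (N * (S - 1) + 1 - 1 - t) := by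
  have hTr : ((N * (S - 1) + 1 : ℕ) : ℝ) = N * S - N + 1 := by
    push_cast [Nat.cast_sub (by omega : 1 ≤ S)]; ring
  have hpot0 : ∀ t, 0 ≤ potential N (N * (S - 1) + 1) q t xs := by
    intro t; unfold potential; split_ifs <;> positivity
  generalize hT : N * (S - 1) + 1 = T at *
  split_ifs with hR
  swap
  · exact mul_nonneg (hpot0 t) (by positivity)
  have hNr : (2 : ℝ) ≤ N := by exact_mod_cast hN
  have htr : (t : ℝ) + 1 ≤ T := by exact_mod_cast ht
  have hmax : S ≤ maxLoad (dynOpaque N T q xs t).2 := by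
    have h1 := maxLoad_hitTime T S _ (lt_of_le_of_lt hR ht)
    have h2 := maxLoad_mono q xs hR
    simp only at h1 h2
    omega
  have hmaxr : (S : ℝ) ≤ maxLoad (dynOpaque N T q xs t).2 := by exact_mod_cast hmax
  have hgap : ((T : ℝ) - t) / N ≤ gap (dynOpaque N T q xs t).2 t := by
    unfold gap
    rw [hTr, div_le_iff₀ (by positivity), sub_mul, div_mul_cancel₀ _ (by positivity)]
    nlinarith
  have hr0 : (0 : ℝ) ≤ (T : ℝ) - t := by linarith
  have hb4 : q / (4 * (N : ℝ)) ≤ 1 / (4 * N) := by gcongr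
  have hb : q / (4 * (N : ℝ)) < 1 := by
    rw [div_lt_one (by positivity)]; linarith
  have hflag : (dynOpaque N T q xs t).1 = true := by
    by_contra hf
    rw [Bool.not_eq_true] at hf
    have h1 := gap_lt_of_flag_false q xs t hf
    have h2 := threshold_le hN hq0 hr0
    have h3 := mul_lt_mul_of_pos_left (lt_of_le_of_lt hgap h1) (by positivity : (0 : ℝ) < N)
    rw [mul_div_cancel₀ _ (by positivity)] at h3
    nlinarith
  have hV : ((T : ℝ) - t) / N ≤ devNorm (dynOpaque N T q xs t).2 t := by
    refine hgap.trans ?_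
    obtain ⟨i, _, hi⟩ := exists_mem_eq_sup univ ⟨0, mem_univ _⟩ (dynOpaque N T q xs t).2
    have := (abs_le.mp (abs_dev_le_devNorm (dynOpaque N T q xs t).2 t i)).2
    unfold gap maxLoad
    rw [hi]; exact this
  unfold potential
  rw [if_pos hflag, ← Real.exp_nat_mul, ← Real.exp_add, Nat.sub_sub,
    Nat.cast_sub (by omega)]
  apply Real.one_le_exp
  have hη0 : 0 < q / (18 * (N : ℝ)) := by positivity
  have hkey : 0 ≤ devNorm (dynOpaque N T q xs t).2 t - q / (4 * N) * ((T : ℝ) - t)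
      - ((T : ℝ) - t - 1) * (1 / (2 * N)) := by
    have h1 : q / (4 * N) * ((T : ℝ) - t) ≤ 1 / (4 * N) * ((T : ℝ) - t) := by gcongr
    have h2 : ((T : ℝ) - t - 1) * (1 / (2 * N)) ≤ ((T : ℝ) - t) * (1 / (2 * N)) := by
      apply mul_le_mul_of_nonneg_right (by linarith) (by positivity)
    have h3 : ((T : ℝ) - t) / N = ((T : ℝ) - t) * (1 / (2 * N)) + 1 / (4 * N) * ((T : ℝ) - t)
        + 1 / (4 * N) * ((T : ℝ) - t) := by field_simp; ring
    have h4 : 0 ≤ 1 / (4 * N) * ((T : ℝ) - t) := by positivity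
    linarith
  have := mul_nonneg hη0.le hkey
  push_cast
  linarith

/-- **Theorem 6** (expected cycle length of the dynamic opaque selling policy):
`NS - E[R^d] ∈ [N-1, θ]` for a constant `θ` depending only on `N` and `q`. -/
theorem dynamic_opaque_cycle_length (N : ℕ) [NeZero N] (hN : 2 ≤ N) (q : ℝ)
    (hq0 : 0 < q) (hq1 : q ≤ 1) :
    ∃ θ : ℝ, ∀ S : ℕ, 2 ≤ S →
      ((N : ℝ) - 1 ≤ (N : ℝ) * (S : ℝ) - dynOpaqueER N q S) ∧
      ((N : ℝ) * (S : ℝ) - dynOpaqueER N q S ≤ θ) := by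
  refine ⟨(N : ℝ) - 1 + potBound N q * (1 - Real.exp (-(q / (18 * N) * (1 / (2 * N)))))⁻¹,
    fun S hS => ?_⟩
  have hNr : (2 : ℝ) ≤ N := by exact_mod_cast hN
  have hTr : ((N * (S - 1) + 1 : ℕ) : ℝ) = N * S - N + 1 := by
    push_cast [Nat.cast_sub (by omega : 1 ≤ S)]; ring
  constructor
  · have h := expec_mono N (N * (S - 1) + 1) hq0 hq1
      (X := fun xs => (hitTime (N * (S - 1) + 1) S
        (fun t => (dynOpaque N (N * (S - 1) + 1) q xs t).2) : ℝ))
      (Y := fun _ => ((N * (S - 1) + 1 : ℕ) : ℝ))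
      (fun xs => by exact_mod_cast hitTime_le _ _ _)
    rw [expec_const _ _ hN, hTr] at h
    have : dynOpaqueER N q S ≤ N * S - N + 1 := h
    linarith
  · set ρ := Real.exp (-(q / (18 * N) * (1 / (2 * (N : ℝ))))) with hρ
    have hρ1 : ρ < 1 := by
      rw [hρ, Real.exp_lt_one_iff]
      have : 0 < q / (18 * (N : ℝ)) * (1 / (2 * N)) := by positivity
      linarith
    have hρ0 : 0 < ρ := Real.exp_pos _
    -- Pathwise, `T - R` counts the times `t < T` with `R ≤ t`.
    have hpath : ∀ xs : Fin (N * (S - 1) + 1) → Arrival N, ((N * (S - 1) + 1 : ℕ) : ℝ) ≤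
        (hitTime (N * (S - 1) + 1) S
          (fun t => (dynOpaque N (N * (S - 1) + 1) q xs t).2) : ℝ) +
        ∑ t ∈ range (N * (S - 1) + 1), potential N (N * (S - 1) + 1) q t xs *
          ρ ^ (N * (S - 1) + 1 - 1 - t) := by
      intro xs
      have h1 := sum_le_sum fun t (ht : t ∈ range (N * (S - 1) + 1)) =>
        indicator_le_potential hN hq0 hq1 hS xs t (mem_range.mp ht)
      have hle := hitTime_le (N * (S - 1) + 1) S
        (fun t => (dynOpaque N (N * (S - 1) + 1) q xs t).2)
      set R := hitTime (N * (S - 1) + 1) S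
        (fun t => (dynOpaque N (N * (S - 1) + 1) q xs t).2)
      have hcount : ∑ t ∈ range (N * (S - 1) + 1), (if R ≤ t then (1 : ℝ) else 0)
          = ((N * (S - 1) + 1 : ℕ) : ℝ) - R := by
        rw [sum_boole]
        have : (range (N * (S - 1) + 1)).filter (fun t => R ≤ t) = Ico R (N * (S - 1) + 1) := by
          ext t; simp only [mem_filter, mem_range, mem_Ico]; omega
        rw [this, Nat.card_Ico, Nat.cast_sub hle]
      rw [hcount] at h1
      linarith
    have h := expec_mono N (N * (S - 1) + 1) hq0 hq1 hpath
    rw [expec_const _ _ hN, expec_add, expec_sum, hTr] at h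
    have hb : ∑ t ∈ range (N * (S - 1) + 1), expec N (N * (S - 1) + 1) q
        (fun xs => potential N (N * (S - 1) + 1) q t xs * ρ ^ (N * (S - 1) + 1 - 1 - t)) ≤
        potBound N q * (1 - ρ)⁻¹ := by
      have hpb : 0 ≤ potBound N q := by
        unfold potBound
        have : 0 ≤ 1 - Real.exp (-(q / (18 * N) * (q / (4 * (N : ℝ))))) := by
          rw [sub_nonneg, Real.exp_le_one_iff]
          have : 0 < q / (18 * (N : ℝ)) * (q / (4 * N)) := by positivity
          linarith
        positivity
      calc _ ≤ ∑ t ∈ range (N * (S - 1) + 1), potBound N q * ρ ^ (N * (S - 1) + 1 - 1 - t) := by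
            refine sum_le_sum fun t ht => ?_
            rw [expec_mul_const]
            have := expec_potential_le hN hq0 hq1 t (mem_range.mp ht).le
            gcongr
        _ ≤ _ := by
            rw [← mul_sum]
            gcongr
            exact geom_reflect_le hρ0.le hρ1 _ _ le_rfl
    have hE : (N : ℝ) * S - N + 1 ≤ dynOpaqueER N q S + _ := h
    linarith
end

section
/- Universal lower bound on long-run average inventory cost (Proposition 3): Fix integers N ≥ 2 and S ≥ 1 and reals K > 0, h > 0, δ ≥ 0. Let R be a random variable with 1 ≤ R ≤ N(S−1)+1 almost surely and E[R], E[R²] finite, and let D be a nonnegative integrable random variable. Then K/E[R] + (h/2)·(2NS + 1 − E[R²]/E[R]) + δ·E[D]/E[R] ≥ K/(N(S−1)+1) + (h/2)·(NS + N). -/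
/-!
Write `M = N(S-1)+1` for the maximal cycle length. The three cost terms are bounded separately:
`E[R] ≤ M` gives `K/M ≤ K/E[R]`; the pointwise inequality `R² ≤ M R` gives `E[R²]/E[R] ≤ M`, and
`2NS + 1 - M = NS + N`; the discount term is nonnegative.
-/

open MeasureTheory

/-- **Proposition 3** (universal lower bound on long-run average inventory cost): for any
cycle length `R` with `1 ≤ R ≤ N(S-1)+1` a.s. and any nonnegative integrable discount
count `D`,
`K/E[R] + (h/2)(2NS + 1 - E[R²]/E[R]) + δ E[D]/E[R] ≥ K/(N(S-1)+1) + (h/2)(NS + N)`. -/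
theorem universal_cost_lower_bound {Ω : Type} [MeasurableSpace Ω] (μ : Measure Ω)
    [IsProbabilityMeasure μ] (N S : ℕ) (hN : 2 ≤ N) (hS : 1 ≤ S)
    (K h δ : ℝ) (hK : 0 < K) (hh : 0 < h) (hδ : 0 ≤ δ)
    (R : Ω → ℝ) (hRm : Measurable R)
    (hR : ∀ᵐ ω ∂μ, 1 ≤ R ω ∧ R ω ≤ (N : ℝ) * ((S : ℝ) - 1) + 1)
    (D : Ω → ℝ) (hD : Integrable D μ) (hD0 : ∀ᵐ ω ∂μ, 0 ≤ D ω) :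
    K / ((N : ℝ) * ((S : ℝ) - 1) + 1) + (h / 2) * ((N : ℝ) * (S : ℝ) + (N : ℝ)) ≤
      K / (∫ ω, R ω ∂μ) +
        (h / 2) * (2 * (N : ℝ) * (S : ℝ) + 1 - (∫ ω, R ω ^ 2 ∂μ) / (∫ ω, R ω ∂μ)) +
        δ * (∫ ω, D ω ∂μ) / (∫ ω, R ω ∂μ) := by
  set M : ℝ := (N : ℝ) * ((S : ℝ) - 1) + 1 with hM
  have hRi : Integrable R μ := by
    refine Integrable.of_bound hRm.aestronglyMeasurable M ?_
    filter_upwards [hR] with ω hω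
    rw [Real.norm_eq_abs, abs_of_nonneg (by linarith [hω.1])]
    exact hω.2
  have hR2i : Integrable (fun ω => R ω ^ 2) μ := by
    refine Integrable.of_bound (hRm.pow_const 2).aestronglyMeasurable (M ^ 2) ?_
    filter_upwards [hR] with ω hω
    rw [Real.norm_eq_abs, abs_of_nonneg (sq_nonneg _)]
    exact pow_le_pow_left₀ (by linarith [hω.1]) hω.2 2
  have hE1 : 1 ≤ ∫ ω, R ω ∂μ := by
    simpa using integral_mono_ae (integrable_const (1 : ℝ)) hRi (hR.mono fun ω hω => hω.1)
  have hEM : ∫ ω, R ω ∂μ ≤ M := by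
    simpa using integral_mono_ae hRi (integrable_const M) (hR.mono fun ω hω => hω.2)
  -- Since `0 ≤ R ≤ M`, pointwise `R² ≤ M R`.
  have hE2 : ∫ ω, R ω ^ 2 ∂μ ≤ M * ∫ ω, R ω ∂μ := by
    rw [← integral_const_mul]
    refine integral_mono_ae hR2i (hRi.const_mul M) ?_
    filter_upwards [hR] with ω hω
    nlinarith [hω.1, hω.2]
  have hpos : 0 < ∫ ω, R ω ∂μ := by linarith
  have hratio : (∫ ω, R ω ^ 2 ∂μ) / (∫ ω, R ω ∂μ) ≤ M := (div_le_iff₀ hpos).2 hE2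
  have hKle : K / M ≤ K / ∫ ω, R ω ∂μ := div_le_div_of_nonneg_left hK.le hpos hEM
  have hDle : 0 ≤ δ * (∫ ω, D ω ∂μ) / (∫ ω, R ω ∂μ) :=
    div_nonneg (mul_nonneg hδ (integral_nonneg_of_ae hD0)) hpos.le
  -- The holding-cost constant is `2NS + 1 - M = NS + N`.
  have hhold : (h / 2) * ((N : ℝ) * (S : ℝ) + (N : ℝ)) ≤
      (h / 2) * (2 * (N : ℝ) * (S : ℝ) + 1 - (∫ ω, R ω ^ 2 ∂μ) / (∫ ω, R ω ∂μ)) :=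
    mul_le_mul_of_nonneg_left (by linarith) (by linarith)
  linarith
end
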